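/- arXiv:2108.09700 — 5 statements merged into one kernel-verified Lean document; each statement's English description precedes it below -/
import Mathlib

section
/- Let α ≥ 1 and let 𝒰 be a free, G-invariant cover of Ṽ × Γ̂ by open sets such that for every (v, ξ) ∈ Ṽ × Γ̂ there exists U ∈ 𝒰 with B_α(v) × {ξ} ⊆ U. Then there exists a constant C = C(𝒰) > 1 such that for every (v, ξ) ∈ Ṽ × Γ̂ there exists U ∈ 𝒰 containing the open ball of radius α around (v, ξ) with respect to the metric d_C. -/
/-!
The group `G` preserves step costs, and every vertex can be translated into the fibre `q⁻¹(1)`,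
which is finite since it is bounded. Hence it suffices to show, for one fixed centre `v`, that every
sufficiently large `C` works simultaneously for all `ξ`.

Fix `v`. A Lebesgue number argument on the compact space `H` (`exists_lebesgue`) gives `ε > 0` such
that each `B_α(v) × B_ε(ξ)` lies in some member of the cover. A chain of cost `< α` starting at
`(v, ξ)` keeps its vertices in `B_α(v)`, and the sum of its `H`-displacements, each measured in the
twisted metric `(x, y) ↦ dist ((q u)⁻¹ • x) ((q u)⁻¹ • y)` of the target vertex `u`, is `< α / C`.
The twisted metrics involved are finitely many and pairwise uniformly equivalent, and, since `V` is
`1`-separated, the vertex changes fewer than `α` times along the chain, however many steps the chain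
has. An induction on the number of changes (`chain_control`) therefore shows that the endpoint of
the chain is `ε`-close to `ξ` in `H` once `α / C` is small enough.
-/

/-- The cost of one step of a chain in `Ṽ × Γ̂`:
`C · d_{Γ̂}(q(u_i)⁻¹·ξ_{i−1}, q(u_i)⁻¹·ξ_i) + d_Ṽ(u_{i−1}, u_i)`. -/
noncomputable def chainCost {V H G : Type} [MetricSpace V] [MetricSpace H]
    [Group G] [MulAction G H] (q : V → G) (C : ℝ) (p p' : V × H) : ℝ :=
  C * dist ((q p'.1)⁻¹ • p.2) ((q p'.1)⁻¹ • p'.2) + dist p.1 p'.1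

/-- The metric `d_C` on `Ṽ × Γ̂`: the infimum over all finite chains from `p` to `p'`
of the sum of the step costs. -/
noncomputable def dC {V H G : Type} [MetricSpace V] [MetricSpace H]
    [Group G] [MulAction G H] (q : V → G) (C : ℝ) (p p' : V × H) : ℝ :=
  sInf { r : ℝ | ∃ l : List (V × H), l.head? = some p ∧ l.getLast? = some p' ∧
    r = ((l.zip l.tail).map fun pq => chainCost q C pq.1 pq.2).sum }

/-- The sum of `f` over consecutive pairs of a chain. -/
noncomputable def stepSum {X : Type} (f : X → X → ℝ) (l : List X) : ℝ :=
  ((l.zip l.tail).map fun pq => f pq.1 pq.2).sum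

lemma stepSum_singleton {X : Type} (f : X → X → ℝ) (a : X) : stepSum f [a] = 0 := by
  simp [stepSum]

lemma stepSum_cons_cons {X : Type} (f : X → X → ℝ) (a b : X) (l : List X) :
    stepSum f (a :: b :: l) = f a b + stepSum f (b :: l) := by
  simp [stepSum]

lemma stepSum_nonneg {X : Type} (f : X → X → ℝ) (hf : ∀ a b, 0 ≤ f a b) (l : List X) :
    0 ≤ stepSum f l := by
  apply List.sum_nonneg
  intro x hx
  obtain ⟨pq, -, rfl⟩ := List.mem_map.1 hx
  exact hf _ _

lemma stepSum_map {X : Type} (f : X → X → ℝ) (φ : X → X) (hφ : ∀ a b, f (φ a) (φ b) = f a b)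
    (l : List X) : stepSum f (l.map φ) = stepSum f l := by
  induction l with
  | nil => simp [stepSum]
  | cons a l ih =>
    cases l with
    | nil => simp [stepSum]
    | cons b l =>
      simp only [List.map_cons] at ih ⊢
      rw [stepSum_cons_cons, stepSum_cons_cons, ih, hφ]

/-- The `H`-part of the cost of one step, without the factor `C`. -/
noncomputable def hStep {V H G : Type} [MetricSpace H]
    [Group G] [MulAction G H] (q : V → G) (p p' : V × H) : ℝ :=
  dist ((q p'.1)⁻¹ • p.2) ((q p'.1)⁻¹ • p'.2)

/-- The `V`-part of the cost of one step. -/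
noncomputable def vStep {V H : Type} [MetricSpace V] (p p' : V × H) : ℝ :=
  dist p.1 p'.1

lemma stepSum_chainCost {V H G : Type} [MetricSpace V] [MetricSpace H]
    [Group G] [MulAction G H] (q : V → G) (C : ℝ) (l : List (V × H)) :
    stepSum (chainCost q C) l = C * stepSum (hStep q) l + stepSum vStep l := by
  induction l with
  | nil => simp [stepSum]
  | cons a l ih =>
    cases l with
    | nil => simp [stepSum]
    | cons b l =>
      simp only [stepSum_cons_cons, ih, chainCost, hStep, vStep]
      ring

lemma dist_le_stepSum_vStep {V H : Type} [MetricSpace V] (l : List (V × H)) :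
    ∀ p p' : V × H, (p :: l).getLast? = some p' → dist p.1 p'.1 ≤ stepSum vStep (p :: l) := by
  induction l with
  | nil =>
    intro p p' h
    obtain rfl : p = p' := by simpa using h
    simp [stepSum_singleton]
  | cons b l ih =>
    intro p p' h
    rw [List.getLast?_cons_cons] at h
    rw [stepSum_cons_cons]
    have := ih b p' h
    have h2 := dist_triangle p.1 b.1 p'.1
    have e : vStep p b = dist p.1 b.1 := rfl
    linarith

lemma exists_chain_of_dC_lt {V H G : Type} [MetricSpace V] [MetricSpace H]
    [Group G] [MulAction G H] {q : V → G} {C α : ℝ} {p p' : V × H} (h : dC q C p p' < α) :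
    ∃ l : List (V × H), (p :: l).getLast? = some p' ∧ stepSum (chainCost q C) (p :: l) < α := by
  -- Non-emptiness of the set of chain costs excludes the junk value `sInf ∅ = 0`.
  obtain ⟨r, ⟨l, h1, h2, rfl⟩, hr⟩ := exists_lt_of_csInf_lt (by
    exact ⟨_, [p, p'], rfl, rfl, rfl⟩) h
  obtain ⟨t, rfl⟩ := List.head?_eq_some_iff.1 h1
  exact ⟨t, h2, hr⟩

lemma finite_uniform {H G : Type} [MetricSpace H] [CompactSpace H] [Group G] [MulAction G H]
    (contH : ∀ g : G, Continuous fun ξ : H => g • ξ) {R : Set G} (hR : R.Finite)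
    {ε : ℝ} (hε : 0 < ε) :
    ∃ δ > 0, ∀ g ∈ R, ∀ x y : H, dist x y < δ → dist (g • x) (g • y) < ε := by
  have key : ∀ g ∈ R, ∀ᶠ δ in nhdsWithin (0 : ℝ) (Set.Ioi 0),
      ∀ x y : H, dist x y < δ → dist (g • x) (g • y) < ε := by
    intro g _
    obtain ⟨δ, hδ, h⟩ := Metric.uniformContinuous_iff.1
      (CompactSpace.uniformContinuous_of_continuous (contH g)) ε hε
    filter_upwards [Ioo_mem_nhdsGT hδ] with d hd x y hxy
    exact h (hxy.trans hd.2)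
  obtain ⟨δ, h1, h2⟩ := (((Filter.eventually_all_finite hR).2 key).and self_mem_nhdsWithin).exists
  exact ⟨δ, h2, h1⟩

/-- Chains in `B_α(v)` whose vertex part has length `< n + 1` and whose `H`-part is short end close
to where they start. The point `η` is a fixed comparison point, whose distance to the current
point is measured in the twisted metric of the current vertex: steps with constant vertex are
absorbed by the triangle inequality, and a step to a new vertex lowers `n` by one. -/
lemma chain_control {V H G : Type} [MetricSpace V] [MetricSpace H] [CompactSpace H]
    [Group G] [MulAction G H]
    (sepV : ∀ v w : V, v ≠ w → (1 : ℝ) ≤ dist v w)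
    (properV : ∀ (v : V) (r : ℝ), {w : V | dist v w ≤ r}.Finite)
    (contH : ∀ g : G, Continuous fun ξ : H => g • ξ)
    (q : V → G) (α : ℝ) (v : V) (n : ℕ) :
    ∀ ε > 0, ∃ δ > 0, ∀ (l : List (V × H)) (p p' : V × H) (η : H),
      (p :: l).getLast? = some p' →
      dist v p.1 + stepSum vStep (p :: l) ≤ α →
      stepSum vStep (p :: l) < n + 1 →
      dist ((q p.1)⁻¹ • η) ((q p.1)⁻¹ • p.2) + stepSum (hStep q) (p :: l) < δ →
      dist η p'.2 < ε := by
  have hF := properV v α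
  have vnn : ∀ l : List (V × H), 0 ≤ stepSum vStep l := stepSum_nonneg _ fun _ _ => dist_nonneg
  have hnn : ∀ l : List (V × H), 0 ≤ stepSum (hStep q) l := stepSum_nonneg _ fun _ _ => dist_nonneg
  induction n with
  | zero =>
    intro ε hε
    obtain ⟨δ, hδ, hu⟩ := finite_uniform contH (hF.image q) hε
    refine ⟨δ, hδ, fun l => ?_⟩
    induction l with
    | nil =>
      intro p p' η hl hα h1 h2
      obtain rfl : p = p' := by simpa using hl
      simp only [stepSum_singleton, add_zero] at hα h2
      simpa using hu (q p.1) ⟨p.1, hα, rfl⟩ _ _ h2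
    | cons b l ih =>
      intro p p' η hl hα h1 h2
      rw [List.getLast?_cons_cons] at hl
      rw [stepSum_cons_cons] at hα h1 h2
      have hv := vnn (b :: l)
      obtain ⟨pu, px⟩ := p
      obtain ⟨bu, bx⟩ := b
      by_cases hpb : pu = bu
      · subst hpb
        simp only [vStep, hStep, dist_self, zero_add] at hα h1 h2 ⊢
        refine ih _ p' η hl hα h1 ?_
        have := dist_triangle ((q pu)⁻¹ • η) ((q pu)⁻¹ • px) ((q pu)⁻¹ • bx)
        simp only
        linarith
      · have := sepV _ _ hpb
        simp only [vStep, Nat.cast_zero] at h1 hv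
        linarith
  | succ n ihn =>
    intro ε hε
    obtain ⟨δ', hδ', hn⟩ := ihn ε hε
    obtain ⟨δ₁, hδ₁, hu⟩ := finite_uniform contH (hF.image q) hε
    obtain ⟨δ₂, hδ₂, hu₂⟩ := finite_uniform contH
      (Set.Finite.image2 (fun u w => (q u)⁻¹ * q w) hF hF) (half_pos hδ')
    refine ⟨min δ₁ (min δ₂ (δ' / 2)), by positivity, fun l => ?_⟩
    induction l with
    | nil =>
      intro p p' η hl hα h1 h2
      obtain rfl : p = p' := by simpa using hl
      simp only [stepSum_singleton, add_zero] at hα h2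
      simpa using hu (q p.1) ⟨p.1, hα, rfl⟩ _ _ (h2.trans_le (min_le_left _ _))
    | cons b l ih =>
      intro p p' η hl hα h1 h2
      rw [List.getLast?_cons_cons] at hl
      rw [stepSum_cons_cons] at hα h1 h2
      have hv := vnn (b :: l)
      have hh := hnn (b :: l)
      obtain ⟨pu, px⟩ := p
      obtain ⟨bu, bx⟩ := b
      by_cases hpb : pu = bu
      · subst hpb
        simp only [vStep, hStep, dist_self, zero_add] at hα h1 h2 ⊢
        refine ih _ p' η hl hα h1 ?_
        have := dist_triangle ((q pu)⁻¹ • η) ((q pu)⁻¹ • px) ((q pu)⁻¹ • bx)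
        simp only
        linarith
      · have hsep := sepV _ _ hpb
        have tri := dist_triangle v pu bu
        have e1 : vStep (pu, px) (bu, bx) = dist pu bu := rfl
        have e2 : hStep q (pu, px) (bu, bx)
            = dist ((q bu)⁻¹ • px) ((q bu)⁻¹ • bx) := rfl
        rw [e1] at hα h1
        rw [e2] at h2
        simp only at hα h2
        have d1 : (0 : ℝ) ≤ dist ((q bu)⁻¹ • px) ((q bu)⁻¹ • bx) := dist_nonneg
        have d2 : (0 : ℝ) ≤ dist ((q pu)⁻¹ • η) ((q pu)⁻¹ • px) := dist_nonneg
        have m1 : min δ₁ (min δ₂ (δ' / 2)) ≤ δ₂ := (min_le_right _ _).trans (min_le_left _ _)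
        have m2 : min δ₁ (min δ₂ (δ' / 2)) ≤ δ' / 2 := (min_le_right _ _).trans (min_le_right _ _)
        have hpu : pu ∈ {w : V | dist v w ≤ α} := by
          simp only [Set.mem_ofPred_eq]; linarith
        have hbu : bu ∈ {w : V | dist v w ≤ α} := by
          simp only [Set.mem_ofPred_eq]; linarith
        have h3 := hu₂ _ ⟨bu, hbu, pu, hpu, rfl⟩ ((q pu)⁻¹ • η) ((q pu)⁻¹ • px) (by linarith)
        simp only [mul_smul, smul_inv_smul] at h3
        refine hn l (bu, bx) p' η hl ?_ ?_ ?_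
        · simp only; linarith
        · push_cast at h1; linarith
        · have := dist_triangle ((q bu)⁻¹ • η) ((q bu)⁻¹ • px) ((q bu)⁻¹ • bx)
          simp only
          linarith

lemma exists_lebesgue {V H : Type} [MetricSpace V] [MetricSpace H] [CompactSpace H]
    (properV : ∀ (v : V) (r : ℝ), {w : V | dist v w ≤ r}.Finite)
    (α : ℝ) (𝒰 : Set (Set (V × H))) (hopen : ∀ U ∈ 𝒰, IsOpen U) (v : V)
    (hball : ∀ ξ : H, ∃ U ∈ 𝒰, Metric.ball v α ×ˢ ({ξ} : Set H) ⊆ U) :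
    ∃ ε > 0, ∀ ξ : H, ∃ U ∈ 𝒰, Metric.ball v α ×ˢ Metric.ball ξ ε ⊆ U := by
  have hfin : (Metric.ball v α).Finite :=
    (properV v α).subset fun w hw => by
      rw [Metric.mem_ball, dist_comm] at hw
      exact hw.le
  let c : 𝒰 → Set H := fun U => {ξ | ∀ w ∈ Metric.ball v α, (w, ξ) ∈ U.1}
  have hc : ∀ U, IsOpen (c U) := by
    intro U
    have : c U = ⋂ w ∈ Metric.ball v α, (fun ξ : H => (w, ξ)) ⁻¹' U.1 := by
      ext; simp [c]
    rw [this]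
    exact hfin.isOpen_biInter fun w _ => (hopen U.1 U.2).preimage (by fun_prop)
  obtain ⟨ε, hε, h⟩ := lebesgue_number_lemma_of_metric (isCompact_univ (X := H)) hc (by
    intro ξ _
    obtain ⟨U, hU, hs⟩ := hball ξ
    exact Set.mem_iUnion.2 ⟨⟨U, hU⟩, fun w hw => hs ⟨hw, rfl⟩⟩)
  refine ⟨ε, hε, fun ξ => ?_⟩
  obtain ⟨U, hU⟩ := h ξ trivial
  exact ⟨U.1, U.2, fun p hp => hU hp.2 p.1 hp.1⟩

/-- The claim for a fixed centre `v`, phrased with chains: all large `C` work for all `ξ` at once. -/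
lemma eventually_good {V H G : Type} [MetricSpace V] [MetricSpace H] [CompactSpace H]
    [Group G] [MulAction G H]
    (sepV : ∀ v w : V, v ≠ w → (1 : ℝ) ≤ dist v w)
    (properV : ∀ (v : V) (r : ℝ), {w : V | dist v w ≤ r}.Finite)
    (contH : ∀ g : G, Continuous fun ξ : H => g • ξ)
    (q : V → G) (α : ℝ)
    (𝒰 : Set (Set (V × H))) (hopen : ∀ U ∈ 𝒰, IsOpen U)
    (v : V) (hball : ∀ ξ : H, ∃ U ∈ 𝒰, Metric.ball v α ×ˢ ({ξ} : Set H) ⊆ U) :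
    ∀ᶠ C in Filter.atTop, ∀ ξ : H, ∃ U ∈ 𝒰, ∀ (l : List (V × H)) (p' : V × H),
      ((v, ξ) :: l).getLast? = some p' → stepSum (chainCost q C) ((v, ξ) :: l) < α → p' ∈ U := by
  obtain ⟨ε, hε, hU⟩ := exists_lebesgue properV α 𝒰 hopen v hball
  obtain ⟨n, hn⟩ := exists_nat_gt α
  obtain ⟨δ, hδ, hcon⟩ := chain_control sepV properV contH q α v n ε hε
  filter_upwards [Filter.eventually_ge_atTop (α / δ), Filter.eventually_gt_atTop 0]
    with C hC hC0 ξ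
  obtain ⟨U, hU𝒰, hUs⟩ := hU ξ
  refine ⟨U, hU𝒰, fun l p' hl hcost => hUs ?_⟩
  rw [stepSum_chainCost] at hcost
  have vnn : 0 ≤ stepSum vStep ((v, ξ) :: l) := stepSum_nonneg _ (fun _ _ => dist_nonneg) _
  have hnn : 0 ≤ stepSum (hStep q) ((v, ξ) :: l) := stepSum_nonneg _ (fun _ _ => dist_nonneg) _
  have hmul := mul_nonneg hC0.le hnn
  have hd := dist_le_stepSum_vStep l _ _ hl
  have hsmall : stepSum (hStep q) ((v, ξ) :: l) < δ := by
    rw [div_le_iff₀ hδ] at hC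
    by_contra! hcon'
    have := mul_le_mul_of_nonneg_left hcon' hC0.le
    linarith
  refine ⟨?_, ?_⟩
  · rw [Metric.mem_ball, dist_comm]
    simp only at hd
    linarith
  · rw [Metric.mem_ball, dist_comm]
    exact hcon l (v, ξ) p' ξ hl (by simp only [dist_self]; linarith) (by linarith)
      (by simpa using hsmall)

/-- (Thickening long thin covers, cf. Lemma 5.1 of Bartels–Lück–Reich.)
Here `V = Ṽ` is the (1-separated, locally finite) vertex set of the universal cover
tree of a finite graph `Γ` on which the fundamental group `G` acts freely by isometries
with displacement at least `girth(Γ)`, cocompactly with codiameter `diam Γ`; `H = Γ̂`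
is the compact boundary compactification of the tree on which `G` acts by
homeomorphisms, and `q : Ṽ → G` is a `G`-equivariant map whose fiber over `1` has
diameter at most `2·diam Γ`.  Let `α ≥ 1` and let `𝒰` be a free `G`-invariant cover
of `Ṽ × Γ̂` by open sets such that every `B_α(v) × {ξ}` is contained in some member.
Then there exists `C > 1` such that every open `d_C`-ball of radius `α` is contained
in some member of `𝒰`. -/
theorem stmt4 {V H G : Type} [MetricSpace V] [MetricSpace H] [CompactSpace H]
    [Group G] [MulAction G V] [MulAction G H]
    (isomV : ∀ (g : G) (v w : V), dist (g • v) (g • w) = dist v w)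
    (sepV : ∀ v w : V, v ≠ w → (1 : ℝ) ≤ dist v w)
    (properV : ∀ (v : V) (r : ℝ), {w : V | dist v w ≤ r}.Finite)
    (contH : ∀ g : G, Continuous fun ξ : H => g • ξ)
    (girth : ℝ) (hgirth : 3 ≤ girth)
    (disp : ∀ (g : G) (v : V), g ≠ 1 → girth ≤ dist v (g • v))
    (diamΓ : ℝ) (hdiam : 0 ≤ diamΓ)
    (cocpt : ∀ v w : V, ∃ g : G, dist v (g • w) ≤ diamΓ)
    (q : V → G) (hq : ∀ (g : G) (v : V), q (g • v) = g * q v)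
    (hqfib : ∀ v w : V, q v = 1 → q w = 1 → dist v w ≤ 2 * diamΓ)
    (α : ℝ) (hα : 1 ≤ α)
    (𝒰 : Set (Set (V × H)))
    (hopen : ∀ U ∈ 𝒰, IsOpen U)
    (hcover : ⋃₀ 𝒰 = Set.univ)
    (hinv : ∀ (g : G), ∀ U ∈ 𝒰, (fun p : V × H => (g • p.1, g • p.2)) '' U ∈ 𝒰)
    (hfree : ∀ (g : G), g ≠ 1 → ∀ U ∈ 𝒰,
      ((fun p : V × H => (g • p.1, g • p.2)) '' U) ∩ U = ∅)
    (hball : ∀ (v : V) (ξ : H), ∃ U ∈ 𝒰, Metric.ball v α ×ˢ ({ξ} : Set H) ⊆ U) :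
    ∃ C : ℝ, 1 < C ∧ ∀ (v : V) (ξ : H), ∃ U ∈ 𝒰,
      {p : V × H | dC q C (v, ξ) p < α} ⊆ U := by
  have hK : {v : V | q v = 1}.Finite := by
    rcases Set.eq_empty_or_nonempty {v : V | q v = 1} with h | ⟨v, hv⟩
    · rw [h]; exact Set.finite_empty
    · exact (properV v (2 * diamΓ)).subset fun w hw => hqfib v w hv hw
  obtain ⟨C, hC, hC1⟩ := (((Filter.eventually_all_finite hK).2 fun v _ =>
    eventually_good sepV properV contH q α 𝒰 hopen v (hball v)).and
      (Filter.eventually_gt_atTop 1)).exists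
  refine ⟨C, hC1, fun v ξ => ?_⟩
  -- Translate the centre by `(q v)⁻¹` into the fibre over `1`.
  obtain ⟨U, hU, hs⟩ := hC ((q v)⁻¹ • v) (by simp [hq]) ((q v)⁻¹ • ξ)
  refine ⟨_, hinv (q v) U hU, fun p hp => ?_⟩
  obtain ⟨l, hl, hcost⟩ := exists_chain_of_dC_lt hp
  let φ : V × H → V × H := fun p => ((q v)⁻¹ • p.1, (q v)⁻¹ • p.2)
  have hφ : ∀ a b, chainCost q C (φ a) (φ b) = chainCost q C a b := by
    intro a b
    simp [chainCost, φ, hq, isomV, smul_smul]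
  have := hs (l.map φ) (φ p)
    (by
      change (((v, ξ) :: l).map φ).getLast? = _
      rw [List.getLast?_map, hl, Option.map_some])
    (by
      change stepSum _ (((v, ξ) :: l).map φ) < α
      rw [stepSum_map _ φ hφ]
      exact hcost)
  exact ⟨φ p, this, by simp [φ]⟩
end

section
/- For every C > 0, d_C is a G-invariant metric on Ṽ × Γ̂, and it satisfies: (i) d_Ṽ(v,w) ≤ d_C((v,ξ),(w,ζ)) for all v, w ∈ Ṽ and ξ, ζ ∈ Γ̂; (ii) d_Ṽ(v,w) = d_C((v,ξ),(w,ξ)) for all v, w ∈ Ṽ and ξ ∈ Γ̂; (iii) d_v(ξ,ζ) ≤ d_w(ξ,ζ) + 4·diam(Γ) for all v, w ∈ Ṽ with q(v) = q(w) and all ξ, ζ ∈ Γ̂, where d_v(ξ,ζ) := d_C((v,ξ),(v,ζ)). -/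
/-- `ChainLen q C p p' r` says that some finite chain from `p` to `p'` has total cost `r`. The
constructor `nil` is the chain consisting of the single point `p`. -/
inductive ChainLen {V H G : Type} [MetricSpace V] [MetricSpace H]
    [Group G] [MulAction G H] (q : V → G) (C : ℝ) : V × H → V × H → ℝ → Prop
  | nil (p : V × H) : ChainLen q C p p 0
  | cons (p p' p'' : V × H) (r : ℝ) : ChainLen q C p' p'' r →
      ChainLen q C p p'' (chainCost q C p p' + r)

section

variable {V H G : Type} [MetricSpace V] [MetricSpace H] [Group G] [MulAction G H]
  {q : V → G} {C : ℝ}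

theorem mem_chainSet_iff (p p' : V × H) (r : ℝ) :
    (∃ l : List (V × H), l.head? = some p ∧ l.getLast? = some p' ∧
      r = ((l.zip l.tail).map fun pq => chainCost q C pq.1 pq.2).sum) ↔ ChainLen q C p p' r := by
  constructor
  · rintro ⟨l, h1, h2, rfl⟩
    induction l generalizing p with
    | nil => simp at h1
    | cons a l ih =>
      obtain rfl : a = p := by simpa using h1
      cases l with
      | nil =>
        obtain rfl : a = p' := by simpa using h2
        simpa using ChainLen.nil (q := q) (C := C) a
      | cons b l =>
        have := ih b (by simp) (by simpa using h2)
        simpa using ChainLen.cons a b p' _ this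
  · intro h
    induction h with
    | nil p => exact ⟨[p], by simp⟩
    | cons p p' p'' r _ ih =>
      obtain ⟨l, h1, h2, rfl⟩ := ih
      cases l with
      | nil => simp at h1
      | cons b l =>
        obtain rfl : b = p' := by simpa using h1
        exact ⟨p :: b :: l, by simp, by simpa using h2, by simp⟩

theorem dC_eq (p p' : V × H) : dC q C p p' = sInf {r | ChainLen q C p p' r} := by
  simp only [dC, mem_chainSet_iff]

theorem chainCost_nonneg (hC : 0 < C) (p p' : V × H) : 0 ≤ chainCost q C p p' := by
  unfold chainCost
  positivity

namespace ChainLen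

theorem single (p p' : V × H) : ChainLen q C p p' (chainCost q C p p') := by
  simpa using cons p p' p' 0 (nil p')

theorem append {p p' p'' : V × H} {r s : ℝ} (h : ChainLen q C p p' r)
    (h' : ChainLen q C p' p'' s) : ChainLen q C p p'' (r + s) := by
  induction h with
  | nil p => simpa using h'
  | cons a b c r _ ih =>
    rw [add_assoc]
    exact cons a b _ _ (ih h')

theorem symm {p p' : V × H} {r : ℝ} (h : ChainLen q C p p' r) : ChainLen q C p' p r := by
  induction h with
  | nil p => exact nil p
  | cons a b c r _ ih =>
    -- detour through the boundary coordinate of `a` over the vertex of `b`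
    have h2 := ih.append ((single (q := q) (C := C) b (b.1, a.2)).append (single (b.1, a.2) a))
    convert h2 using 1
    simp only [chainCost, dist_self, dist_comm b.1 a.1,
      dist_comm ((q b.1)⁻¹ • b.2) ((q b.1)⁻¹ • a.2)]
    ring

theorem dist_le (hC : 0 < C) {p p' : V × H} {r : ℝ} (h : ChainLen q C p p' r) :
    dist p.1 p'.1 ≤ r := by
  induction h with
  | nil p => simp
  | cons a b c r _ ih =>
    have h1 := dist_triangle a.1 b.1 c.1
    have h2 : 0 ≤ C * dist ((q b.1)⁻¹ • a.2) ((q b.1)⁻¹ • b.2) := by positivity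
    unfold chainCost
    linarith

theorem nonneg (hC : 0 < C) {p p' : V × H} {r : ℝ} (h : ChainLen q C p p' r) : 0 ≤ r :=
  dist_nonneg.trans (h.dist_le hC)

/-- A chain shorter than the minimal distance between distinct vertices stays over one vertex, so
its length bounds the distance of its ends in the fibre over that vertex. -/
theorem short (hC : 0 < C) (sepV : ∀ v w : V, v ≠ w → (1 : ℝ) ≤ dist v w)
    {p p' : V × H} {r : ℝ} (h : ChainLen q C p p' r) (hr : r < 1) :
    p.1 = p'.1 ∧ C * dist ((q p'.1)⁻¹ • p.2) ((q p'.1)⁻¹ • p'.2) ≤ r := by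
  induction h with
  | nil p => simp
  | cons a b c r h ih =>
    have h0 := h.nonneg hC
    have h1 : 0 ≤ C * dist ((q b.1)⁻¹ • a.2) ((q b.1)⁻¹ • b.2) := by positivity
    have h2 := chainCost_nonneg (q := q) hC a b
    obtain ⟨e, hle⟩ := ih (by linarith)
    have hab : a.1 = b.1 := by
      by_contra hne
      have := sepV _ _ hne
      unfold chainCost at hr
      linarith
    refine ⟨hab.trans e, ?_⟩
    have h3 := mul_le_mul_of_nonneg_left
      (dist_triangle ((q c.1)⁻¹ • a.2) ((q c.1)⁻¹ • b.2) ((q c.1)⁻¹ • c.2)) hC.le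
    rw [mul_add] at h3
    simp only [chainCost, hab, dist_self, e]
    linarith

theorem smul [MulAction G V] (isomV : ∀ (g : G) (v w : V), dist (g • v) (g • w) = dist v w)
    (hq : ∀ (g : G) (v : V), q (g • v) = g * q v) (g : G) {p p' : V × H} {r : ℝ}
    (h : ChainLen q C p p' r) : ChainLen q C (g • p.1, g • p.2) (g • p'.1, g • p'.2) r := by
  induction h with
  | nil p => exact nil _
  | cons a b c r _ ih =>
    convert cons (g • a.1, g • a.2) _ _ _ ih using 2
    simp [chainCost, hq, isomV, mul_smul]

end ChainLen

theorem dC_le (hC : 0 < C) {p p' : V × H} {r : ℝ} (h : ChainLen q C p p' r) :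
    dC q C p p' ≤ r := by
  rw [dC_eq]
  exact csInf_le ⟨0, fun s hs => ChainLen.nonneg hC hs⟩ h

theorem le_dC {p p' : V × H} {x : ℝ} (h : ∀ r, ChainLen q C p p' r → x ≤ r) :
    x ≤ dC q C p p' := by
  rw [dC_eq]
  exact le_csInf ⟨_, ChainLen.single p p'⟩ h

theorem exists_chainLen_lt {p p' : V × H} {x : ℝ} (h : dC q C p p' < x) :
    ∃ r, ChainLen q C p p' r ∧ r < x := by
  by_contra! hcon
  exact absurd (le_dC hcon) (not_le.mpr h)

theorem dC_triangle (hC : 0 < C) (p p' p'' : V × H) :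
    dC q C p p'' ≤ dC q C p p' + dC q C p' p'' := by
  refine le_of_forall_pos_le_add fun ε hε => ?_
  obtain ⟨r, hr, hr'⟩ := exists_chainLen_lt (lt_add_of_pos_right (dC q C p p') (half_pos hε))
  obtain ⟨s, hs, hs'⟩ := exists_chainLen_lt (lt_add_of_pos_right (dC q C p' p'') (half_pos hε))
  have := dC_le hC (hr.append hs)
  linarith

theorem dC_fixed_boundary (hC : 0 < C) (v w : V) (ξ : H) :
    dC q C (v, ξ) (w, ξ) = dist v w := by
  apply le_antisymm
  · simpa [chainCost] using dC_le hC (ChainLen.single (q := q) (C := C) (v, ξ) (w, ξ))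
  · exact le_dC fun r hr => hr.dist_le hC

theorem eq_of_dC_eq_zero (hC : 0 < C) (sepV : ∀ v w : V, v ≠ w → (1 : ℝ) ≤ dist v w)
    {p p' : V × H} (h : dC q C p p' = 0) : p = p' := by
  have hV : p.1 = p'.1 := by
    obtain ⟨r, hr, hr1⟩ := exists_chainLen_lt (h.trans_lt one_pos)
    exact (hr.short hC sepV hr1).1
  have hle : C * dist ((q p'.1)⁻¹ • p.2) ((q p'.1)⁻¹ • p'.2) ≤ 0 := by
    refine le_of_forall_pos_le_add fun ε hε => ?_
    obtain ⟨r, hr, hr1⟩ := exists_chainLen_lt (h.trans_lt (lt_min one_pos hε))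
    have := (hr.short hC sepV (hr1.trans_le (min_le_left _ _))).2
    have := min_le_right 1 ε
    linarith
  have h0 : dist ((q p'.1)⁻¹ • p.2) ((q p'.1)⁻¹ • p'.2) = 0 :=
    le_antisymm (nonpos_of_mul_nonpos_right hle hC) dist_nonneg
  exact Prod.ext hV (MulAction.injective _ (dist_eq_zero.mp h0))

end

/-- For every `C > 0` the function `d_C` is a `G`-invariant metric on
`Ṽ × Γ̂` satisfying (i) `d_Ṽ(v,w) ≤ d_C((v,ξ),(w,ζ))`, (ii)
`d_Ṽ(v,w) = d_C((v,ξ),(w,ξ))` and (iii) `d_v(ξ,ζ) ≤ d_w(ξ,ζ) + 4·diam(Γ)` whenever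
`q(v) = q(w)`, where `d_v(ξ,ζ) := d_C((v,ξ),(v,ζ))`. -/
theorem stmt5 {V H G : Type} [MetricSpace V] [MetricSpace H] [CompactSpace H]
    [Group G] [MulAction G V] [MulAction G H]
    (isomV : ∀ (g : G) (v w : V), dist (g • v) (g • w) = dist v w)
    (sepV : ∀ v w : V, v ≠ w → (1 : ℝ) ≤ dist v w)
    (properV : ∀ (v : V) (r : ℝ), {w : V | dist v w ≤ r}.Finite)
    (contH : ∀ g : G, Continuous fun ξ : H => g • ξ)
    (diamΓ : ℝ) (hdiam : 0 ≤ diamΓ)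
    (cocpt : ∀ v w : V, ∃ g : G, dist v (g • w) ≤ diamΓ)
    (q : V → G) (hq : ∀ (g : G) (v : V), q (g • v) = g * q v)
    (hqfib : ∀ v w : V, q v = 1 → q w = 1 → dist v w ≤ 2 * diamΓ)
    (C : ℝ) (hC : 0 < C) :
    -- d_C is a metric:
    (∀ p : V × H, dC q C p p = 0) ∧
    (∀ p p' : V × H, 0 ≤ dC q C p p') ∧
    (∀ p p' : V × H, dC q C p p' = dC q C p' p) ∧
    (∀ p p' p'' : V × H, dC q C p p'' ≤ dC q C p p' + dC q C p' p'') ∧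
    (∀ p p' : V × H, dC q C p p' = 0 → p = p') ∧
    -- d_C is G-invariant:
    (∀ (g : G) (p p' : V × H),
      dC q C (g • p.1, g • p.2) (g • p'.1, g • p'.2) = dC q C p p') ∧
    -- (i)
    (∀ (v w : V) (ξ ζ : H), dist v w ≤ dC q C (v, ξ) (w, ζ)) ∧
    -- (ii)
    (∀ (v w : V) (ξ : H), dist v w = dC q C (v, ξ) (w, ξ)) ∧
    -- (iii)
    (∀ v w : V, q v = q w → ∀ ξ ζ : H,
      dC q C (v, ξ) (v, ζ) ≤ dC q C (w, ξ) (w, ζ) + 4 * diamΓ) := by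
  have nonneg : ∀ p p' : V × H, 0 ≤ dC q C p p' := fun p p' => le_dC fun r hr => hr.nonneg hC
  have smul_le : ∀ (g : G) (p p' : V × H),
      dC q C (g • p.1, g • p.2) (g • p'.1, g • p'.2) ≤ dC q C p p' := fun g p p' =>
    le_dC fun r hr => dC_le hC (hr.smul isomV hq g)
  refine ⟨fun p => le_antisymm (dC_le hC (.nil p)) (nonneg p p), nonneg, fun p p' => ?_,
    dC_triangle hC, fun p p' => eq_of_dC_eq_zero hC sepV, fun g p p' => ?_,
    fun v w ξ ζ => le_dC fun r hr => hr.dist_le hC,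
    fun v w ξ => (dC_fixed_boundary hC v w ξ).symm, fun v w hvw ξ ζ => ?_⟩
  · exact le_antisymm (le_dC fun r hr => dC_le hC hr.symm) (le_dC fun r hr => dC_le hC hr.symm)
  · refine le_antisymm (smul_le g p p') ?_
    simpa using smul_le g⁻¹ (g • p.1, g • p.2) (g • p'.1, g • p'.2)
  · have hd : dist v w ≤ 2 * diamΓ := by
      rw [← isomV (q v)⁻¹ v w]
      exact hqfib _ _ (by simp [hq]) (by simp [hq, hvw])
    have h1 := dC_triangle (q := q) hC (v, ξ) (w, ξ) (v, ζ)
    have h2 := dC_triangle (q := q) hC (w, ξ) (w, ζ) (v, ζ)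
    rw [dC_fixed_boundary hC] at h1 h2
    rw [dist_comm] at h2
    linarith
end

section
/- Let X be a proper metric space and 𝒰 a locally finite, finite-dimensional cover of X by open sets. Then the nerve map f^𝒰 : X → |𝒰| is metrically proper if and only if every member of 𝒰 is bounded. Concretely: every member of 𝒰 is bounded if and only if for every finite subset F ⊆ 𝒰 the set {x ∈ X : every U ∈ 𝒰 with x ∈ U belongs to F} (the preimage under f^𝒰 of the subcomplex of |𝒰| spanned by F) is bounded. -/
/-- For a locally finite, finite-dimensional open cover `𝒰` of a proper
metric space `X`, the nerve map is metrically proper iff all members of `𝒰` are bounded.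
Concretely: every member of `𝒰` is bounded iff for every finite `F ⊆ 𝒰` the set of
points all of whose covering members belong to `F` (i.e. the preimage under the nerve
map of the subcomplex spanned by `F`) is bounded. -/
theorem stmt6 {X : Type*} [MetricSpace X] [ProperSpace X]
    (𝒰 : Set (Set X))
    (hopen : ∀ U ∈ 𝒰, IsOpen U)
    (hcover : ⋃₀ 𝒰 = Set.univ)
    (hlf : ∀ U ∈ 𝒰, {W ∈ 𝒰 | (U ∩ W).Nonempty}.Finite)
    (D : ℕ)
    (hdim : ∀ x : X, {U ∈ 𝒰 | x ∈ U}.Finite ∧ {U ∈ 𝒰 | x ∈ U}.ncard ≤ D + 1) :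
    (∀ U ∈ 𝒰, Bornology.IsBounded U) ↔
      (∀ F : Set (Set X), F.Finite → F ⊆ 𝒰 →
        Bornology.IsBounded {x : X | ∀ U ∈ 𝒰, x ∈ U → U ∈ F}) := by
  constructor
  · -- Every point lies in some member of `𝒰`, so the given set is contained in `⋃₀ F`.
    intro hb F hF hFU
    refine ((Bornology.isBounded_sUnion hF).2 fun U hU => hb U (hFU hU)).subset ?_
    intro x hx
    obtain ⟨U, hU, hxU⟩ : x ∈ ⋃₀ 𝒰 := hcover ▸ Set.mem_univ x
    exact ⟨U, hx U hU hxU, hxU⟩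
  · -- Take for `F` the finitely many members meeting `U`; a point of `U` lies in no others.
    intro h U hU
    exact (h _ (hlf U hU) fun W hW => hW.1).subset
      fun x hxU W hW hxW => ⟨hW, x, hxU, hxW⟩
end

section
/- Let X be a metric space with an isometric action of a group G that is cocompact (there is a compact set K ⊆ X with G·K = X), and let 𝒰 be a locally finite, G-invariant cover of X by open sets on which G acts freely (for U ∈ 𝒰 and g ∈ G, g·U = U implies g = 1). Then every member of 𝒰 is bounded. -/
/-!
Finitely many members of `𝒰` cover the compact set `K`. By local finiteness only finitely many
members of `𝒰` meet one of these, hence only finitely many meet `K`. Since `g ↦ g • U` is injective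
by freeness, the set `F` of those `g` for which `g • U` meets `K` is finite. Cocompactness gives
`U ⊆ ⋃ g ∈ F, g⁻¹ • K`, a finite union of isometric copies of a compact set, so `U` is bounded.
-/

/-- If a group `G` acts isometrically and cocompactly on a metric space `X`
and `𝒰` is a locally finite, `G`-invariant open cover on which `G` acts freely, then
every member of `𝒰` is bounded. -/
theorem stmt7 {G X : Type*} [Group G] [MetricSpace X] [MulAction G X]
    (hiso : ∀ (g : G) (x y : X), dist (g • x) (g • y) = dist x y)
    (K : Set X) (hK : IsCompact K) (hcocpt : ∀ x : X, ∃ g : G, g • x ∈ K)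
    (𝒰 : Set (Set X))
    (hopen : ∀ U ∈ 𝒰, IsOpen U)
    (hcover : ⋃₀ 𝒰 = Set.univ)
    (hlf : ∀ U ∈ 𝒰, {W ∈ 𝒰 | (U ∩ W).Nonempty}.Finite)
    (hGinv : ∀ (g : G), ∀ U ∈ 𝒰, (fun x : X => g • x) '' U ∈ 𝒰)
    (hfree : ∀ (g : G), ∀ U ∈ 𝒰, (fun x : X => g • x) '' U = U → g = 1) :
    ∀ U ∈ 𝒰, Bornology.IsBounded U := by
  intro U hU
  obtain ⟨T, hT𝒰, hTfin, hKT⟩ := hK.elim_finite_subcover_image (b := 𝒰) (c := id) hopen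
    (by simp only [id, ← Set.sUnion_eq_biUnion, hcover, Set.subset_univ])
  have hinj : Function.Injective fun g : G => (fun x : X => g • x) '' U := by
    intro g h hgh
    have hfix : (fun x : X => (h⁻¹ * g) • x) '' U = U := by
      have := congrArg (fun V : Set X => (fun x : X => h⁻¹ • x) '' V) hgh
      simpa [Set.image_image, mul_smul] using this
    exact (inv_mul_eq_one.mp (hfree _ U hU hfix)).symm
  have hmeet : (⋃ V ∈ T, {W ∈ 𝒰 | (V ∩ W).Nonempty}).Finite :=
    hTfin.biUnion fun V hV => hlf V (hT𝒰 hV)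
  have hF : {g : G | ∃ x ∈ U, g • x ∈ K}.Finite := by
    refine (hmeet.preimage hinj.injOn).subset ?_
    rintro g ⟨x, hxU, hgx⟩
    obtain ⟨V, hVT, hgxV⟩ := Set.mem_iUnion₂.mp (hKT hgx)
    exact Set.mem_iUnion₂.mpr ⟨V, hVT, hGinv g U hU, g • x, hgxV, x, hxU, rfl⟩
  have hbdd : Bornology.IsBounded
      (⋃ g ∈ {g : G | ∃ x ∈ U, g • x ∈ K}, (fun x : X => g⁻¹ • x) '' K) := by
    refine (Bornology.isBounded_biUnion hF).mpr fun g _ => ?_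
    exact (Isometry.of_dist_eq (hiso g⁻¹)).lipschitz.isBounded_image hK.isBounded
  refine hbdd.subset fun x hx => ?_
  obtain ⟨g, hg⟩ := hcocpt x
  exact Set.mem_iUnion₂.mpr ⟨g, ⟨x, hx, hg⟩, g • x, hg, inv_smul_smul g x⟩
end

section
/- There is a G-equivariant map U ↦ Û from the open subsets of Ṽ × ∂Γ̃ to the open subsets of Ṽ × Γ̂ such that: (i) U ⊆ Û for every open U ⊆ Ṽ × ∂Γ̃; (ii) if U ∩ V = ∅ then Û ∩ V̂ = ∅; and (iii) the projections to Ṽ satisfy pr_Ṽ(U) = pr_Ṽ(Û). (G-equivariance means that the map sends g·U to g·Û for every g ∈ G.) -/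
/-!
Inside a single metric space `H`, a relatively open subset `A` of `B` has the canonical thickening
`thicken B A`, the set of points strictly closer to `A` than to `B \ A`. It is open, meets `B`
exactly in `A`, is empty when `A` is, and thickenings of disjoint sets are disjoint.

The metric on `H` need not be `G`-invariant, so this is made equivariant by using that `G` acts freely
on `V`: there is an equivariant map `c : V → G` (a choice of orbit representatives). The slice of
a set over `v` is moved by `(c v)⁻¹` to the slice over the representative, thickened there,
and moved back. As `V` is discrete, slicewise openness is openness.
-/

/-- A subset of `Ṽ × Γ̂` is a (relatively) open subset of `Ṽ × ∂Γ̃`. -/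
def RelOpenBdry {V H : Type} [TopologicalSpace V] [TopologicalSpace H]
    (B : Set H) (U : Set (V × H)) : Prop :=
  ∃ W : Set (V × H), IsOpen W ∧ U = W ∩ (Set.univ ×ˢ B)

/-- The points of `H` strictly closer to `A` than to `B \ A`. Distances take values in `ℝ≥0∞`,
so the distance to the empty set is `∞`; hence `thicken B ∅ = ∅` and `thicken B B = H` if `B` is
nonempty. -/
def thicken {H : Type} [MetricSpace H] (B A : Set H) : Set H :=
  {x | Metric.infEDist x A < Metric.infEDist x (B \ A)}

lemma isOpen_thicken {H : Type} [MetricSpace H] (B A : Set H) : IsOpen (thicken B A) :=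
  isOpen_lt Metric.continuous_infEDist Metric.continuous_infEDist

lemma thicken_empty {H : Type} [MetricSpace H] (B : Set H) : thicken B ∅ = ∅ := by
  ext x
  simp [thicken]

lemma subset_thicken {H : Type} [MetricSpace H] {B W : Set H} (hW : IsOpen W) :
    W ∩ B ⊆ thicken B (W ∩ B) := by
  intro x hx
  have h0 : Metric.infEDist x (W ∩ B) = 0 := Metric.infEDist_zero_of_mem hx
  have h1 : x ∉ closure (B \ (W ∩ B)) := by
    intro h
    obtain ⟨y, hyW, hyB, hy⟩ := mem_closure_iff.1 h W hW hx.1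
    exact hy ⟨hyW, hyB⟩
  change Metric.infEDist x (W ∩ B) < _
  rw [h0, pos_iff_ne_zero]
  exact fun h => h1 (Metric.mem_closure_iff_infEDist_zero.2 h)

lemma thicken_disjoint {H : Type} [MetricSpace H] {B A A' : Set H} (hA : A ⊆ B) (hA' : A' ⊆ B)
    (h : Disjoint A A') : Disjoint (thicken B A) (thicken B A') := by
  rw [Set.disjoint_left]
  intro x hx hx'
  have h1 : Metric.infEDist x (B \ A) ≤ Metric.infEDist x A' :=
    Metric.infEDist_anti (Set.subset_sdiff.2 ⟨hA', h.symm⟩)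
  have h2 : Metric.infEDist x (B \ A') ≤ Metric.infEDist x A :=
    Metric.infEDist_anti (Set.subset_sdiff.2 ⟨hA, h⟩)
  exact lt_irrefl _ (((lt_of_lt_of_le hx h1).trans hx').trans_le h2)

/-- A free action admits an equivariant map to the acting group. -/
lemma exists_equivariant_map {V G : Type} [Group G] [MulAction G V]
    (free : ∀ (g : G) (v : V), g • v = v → g = 1) :
    ∃ c : V → G, ∀ (g : G) (v : V), c (g • v) = g * c v := by
  let r : V → V := fun v => (Quotient.mk (MulAction.orbitRel G V) v).out
  have hr : ∀ v, ∃ g : G, g • r v = v := fun v => by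
    have h : MulAction.orbitRel G V (r v) v := Quotient.mk_out (s := MulAction.orbitRel G V) v
    exact (MulAction.orbitRel G V).symm h
  have hrg : ∀ (g : G) v, r (g • v) = r v := fun g v =>
    congrArg Quotient.out (Quotient.sound (s := MulAction.orbitRel G V) ⟨g, rfl⟩)
  choose c hc using hr
  refine ⟨c, fun g v => ?_⟩
  have h1 : c (g • v) • r v = (g * c v) • r v := by
    rw [mul_smul, hc v, ← hrg g v, hc]
  have h2 : (g * c v)⁻¹ * c (g • v) = 1 := by
    apply free _ (r v)
    rw [mul_smul, h1, inv_smul_smul]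
  exact (inv_mul_eq_one.1 h2).symm

/-- (Equivariant thickening of open subsets of `Ṽ × ∂Γ̃` to open subsets
of `Ṽ × Γ̂`.)  Here `V = Ṽ` is the vertex set of the universal cover tree of a finite
connected graph `Γ` containing a cycle, `G = π₁(Γ)` acts freely on it by isometries
with displacement at least `girth(Γ) ≥ 3`, `H = Γ̂ = Ṽ ∪ ∂Γ̃` is the compact
compactification of the tree (`ι` the `G`-equivariant inclusion of vertices, `B = ∂Γ̃`
the boundary), and `G` acts on `Γ̂` by homeomorphisms and diagonally on the products.
There is a `G`-equivariant map `U ↦ Û` from the open subsets of `Ṽ × ∂Γ̃` to the open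
subsets of `Ṽ × Γ̂` such that (i) `U ⊆ Û`, (ii) `U ∩ V = ∅ → Û ∩ V̂ = ∅`, and (iii)
`pr_Ṽ(U) = pr_Ṽ(Û)`. -/
theorem stmt12 {V H G : Type} [MetricSpace V] [MetricSpace H] [CompactSpace H]
    [Group G] [MulAction G V] [MulAction G H]
    (isomV : ∀ (g : G) (v w : V), dist (g • v) (g • w) = dist v w)
    (sepV : ∀ v w : V, v ≠ w → (1 : ℝ) ≤ dist v w)
    (properV : ∀ (v : V) (r : ℝ), {w : V | dist v w ≤ r}.Finite)
    (contH : ∀ g : G, Continuous fun ξ : H => g • ξ)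
    (girth : ℝ) (hgirth : 3 ≤ girth)
    (disp : ∀ (g : G) (v : V), g ≠ 1 → girth ≤ dist v (g • v))
    (ι : V → H) (hιinj : Function.Injective ι)
    (hιequiv : ∀ (g : G) (v : V), ι (g • v) = g • ι v)
    (hιdense : Dense (Set.range ι))
    (B : Set H) (hB : Set.range ι = Bᶜ)
    (hBinv : ∀ (g : G), ∀ ξ ∈ B, g • ξ ∈ B) :
    ∃ F : Set (V × H) → Set (V × H),
      -- Û is open and contains U, with the same projection to Ṽ
      (∀ U : Set (V × H), RelOpenBdry B U →
        IsOpen (F U) ∧ U ⊆ F U ∧ Prod.fst '' U = Prod.fst '' F U) ∧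
      -- disjointness is preserved
      (∀ U U' : Set (V × H), RelOpenBdry B U → RelOpenBdry B U' →
        U ∩ U' = ∅ → F U ∩ F U' = ∅) ∧
      -- G-equivariance
      (∀ (g : G), ∀ U : Set (V × H), RelOpenBdry B U →
        F ((fun p : V × H => (g • p.1, g • p.2)) '' U) =
          (fun p : V × H => (g • p.1, g • p.2)) '' F U) := by
  have : DiscreteTopology V := DiscreteTopology.of_forall_le_dist one_pos
    fun v w h => sepV v w h
  obtain ⟨c, hc⟩ := exists_equivariant_map (V := V) (G := G) (by
    intro g v h
    by_contra hg
    have h1 := disp g v hg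
    rw [h, dist_self] at h1
    linarith)
  -- the slice of `U` over `v`, transported to the representative of the orbit of `v`
  let T : Set (V × H) → V → Set H := fun U v => {ξ | (v, c v • ξ) ∈ U}
  have hT : ∀ U, RelOpenBdry B U → ∀ v, ∃ W, IsOpen W ∧ T U v = W ∩ B := by
    rintro U ⟨W, hW, rfl⟩ v
    refine ⟨{ξ | (v, c v • ξ) ∈ W},
      hW.preimage (Continuous.prodMk continuous_const (contH (c v))), ?_⟩
    ext ξ
    have : c v • ξ ∈ B ↔ ξ ∈ B :=
      ⟨fun h => by simpa using hBinv (c v)⁻¹ _ h, hBinv _ _⟩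
    simp [T, this]
  have hTB : ∀ U, RelOpenBdry B U → ∀ v, T U v ⊆ B := fun U hU v => by
    obtain ⟨W, -, h⟩ := hT U hU v
    exact h ▸ Set.inter_subset_right
  have hsub : ∀ U, RelOpenBdry B U → ∀ v, T U v ⊆ thicken B (T U v) := fun U hU v => by
    obtain ⟨W, hW, h⟩ := hT U hU v
    exact h ▸ subset_thicken hW
  refine ⟨fun U => {p | (c p.1)⁻¹ • p.2 ∈ thicken B (T U p.1)}, ?_, ?_, ?_⟩
  · intro U hU
    have hUF : U ⊆ {p | (c p.1)⁻¹ • p.2 ∈ thicken B (T U p.1)} := fun p hp =>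
      hsub U hU p.1 (by simpa [T] using hp)
    refine ⟨?_, hUF, (Set.image_mono hUF).antisymm ?_⟩
    · have : {p : V × H | (c p.1)⁻¹ • p.2 ∈ thicken B (T U p.1)} =
          ⋃ v, {v} ×ˢ {ξ | (c v)⁻¹ • ξ ∈ thicken B (T U v)} := by
        ext ⟨v, ξ⟩
        simp
      change IsOpen {p : V × H | (c p.1)⁻¹ • p.2 ∈ thicken B (T U p.1)}
      rw [this]
      exact isOpen_iUnion fun v => (isOpen_discrete _).prod
        ((isOpen_thicken _ _).preimage (contH (c v)⁻¹))
    · rintro _ ⟨⟨v, ξ⟩, hp, rfl⟩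
      rcases (T U v).eq_empty_or_nonempty with h | ⟨η, hη⟩
      · simp [h, thicken_empty] at hp
      · exact ⟨_, hη, rfl⟩
  · intro U U' hU hU' hdisj
    rw [← Set.disjoint_iff_inter_eq_empty, Set.disjoint_left] at hdisj ⊢
    intro p hp hp'
    exact Set.disjoint_left.1 (thicken_disjoint (hTB U hU p.1) (hTB U' hU' p.1)
      (Set.disjoint_left.2 fun ξ h h' => hdisj h h')) hp hp'
  · intro g U _
    have himg : ∀ (S : Set (V × H)) (v : V) (ξ : H),
        (v, ξ) ∈ (fun p : V × H => (g • p.1, g • p.2)) '' S ↔ (g⁻¹ • v, g⁻¹ • ξ) ∈ S := by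
      intro S v ξ
      constructor
      · rintro ⟨⟨w, η⟩, h, he⟩
        obtain ⟨rfl, rfl⟩ := Prod.mk.inj he
        simpa using h
      · exact fun h => ⟨_, h, by simp⟩
    have hTg : ∀ v, T ((fun p : V × H => (g • p.1, g • p.2)) '' U) v = T U (g⁻¹ • v) := by
      intro v
      ext ξ
      change (v, c v • ξ) ∈ _ '' U ↔ (g⁻¹ • v, c (g⁻¹ • v) • ξ) ∈ U
      rw [himg, hc, mul_smul]
    ext ⟨v, ξ⟩
    rw [himg]
    simp only [Set.mem_ofPred_eq, hTg, hc, mul_inv_rev, inv_inv, mul_smul, smul_inv_smul]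
end
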